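/- arXiv:2012.11023 — 2 statements merged into one kernel-verified Lean document; each statement's English description precedes it below -/
import Mathlib

section
/- Let θ > p ≥ 1 and define L(z) = z⁴ − (16pθ(p+1)/(θ+1)) z² + (16pθ(p+1)(p+θ+2)/(θ+1)²) z − 16pθ(p+1)²/(θ+1)². Then there exists a real number z₀ > p+1 with L(z₀) = 0, and moreover every real root of L that is maximal among the real roots of L is strictly greater than p+1. Consequently, with α = 2(p+1)/(pθ−1) and β = 2(θ+1)/(pθ−1), the largest real root z₀ of L satisfies β z₀ > (p+1)β = 2 + α + β. -/
/-!
The value `L (p + 1)` is `((p + 1) / (θ + 1)) ^ 2` times a difference of two squares, and that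
difference is negative because `(p + 1) * (θ + 1) < (2 * p) * (2 * θ)`. As `L` tends to `+∞`, it has
a root beyond `p + 1`.
-/

open MeasureTheory Real

noncomputable section

/-- Euclidean norm on `Fin n → ℝ`. -/
def enorm' {n : ℕ} (x : Fin n → ℝ) : ℝ := Real.sqrt (∑ i, (x i) ^ 2)

/-- Points of `ℝ^N = ℝ^{N₁} × ℝ^{N₂}`. -/
abbrev Pt (N₁ N₂ : ℕ) := (Fin N₁ → ℝ) × (Fin N₂ → ℝ)

variable {N₁ N₂ : ℕ}

/-- Partial derivative in the variable `x i`. -/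
def pX (i : Fin N₁) (w : Pt N₁ N₂ → ℝ) (z : Pt N₁ N₂) : ℝ :=
  deriv (fun t => w (Function.update z.1 i t, z.2)) (z.1 i)

/-- Partial derivative in the variable `y j`. -/
def pY (j : Fin N₂) (w : Pt N₁ N₂ → ℝ) (z : Pt N₁ N₂) : ℝ :=
  deriv (fun t => w (z.1, Function.update z.2 j t)) (z.2 j)

/-- Laplacian in the `x`-variables. -/
def lapX (w : Pt N₁ N₂ → ℝ) (z : Pt N₁ N₂) : ℝ := ∑ i, pX i (pX i w) z

/-- Laplacian in the `y`-variables. -/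
def lapY (w : Pt N₁ N₂ → ℝ) (z : Pt N₁ N₂) : ℝ := ∑ j, pY j (pY j w) z

/-- The Grushin operator `Δ_s w = Δ_x w + |x|^{2s} Δ_y w`. -/
def grushinLap (s : ℝ) (w : Pt N₁ N₂ → ℝ) (z : Pt N₁ N₂) : ℝ :=
  lapX w z + (enorm' z.1) ^ (2 * s) * lapY w z

/-- Norm of the Grushin gradient: `|∇_s w| = (|∇_x w|² + |x|^{2s}|∇_y w|²)^{1/2}`. -/
def grushinGrad (s : ℝ) (w : Pt N₁ N₂ → ℝ) (z : Pt N₁ N₂) : ℝ :=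
  Real.sqrt ((∑ i, (pX i w z) ^ 2) + (enorm' z.1) ^ (2 * s) * ∑ j, (pY j w z) ^ 2)

/-- Hilbert–Schmidt norm of the Grushin Hessian `∇_s² w`. -/
def grushinHess (s : ℝ) (w : Pt N₁ N₂ → ℝ) (z : Pt N₁ N₂) : ℝ :=
  Real.sqrt ((∑ i, ∑ j, (pX i (pX j w) z) ^ 2)
    + 2 * (enorm' z.1) ^ (2 * s) * (∑ i, ∑ k, (pX i (pY k w) z) ^ 2)
    + (enorm' z.1) ^ (4 * s) * ∑ h, ∑ k, (pY h (pY k w) z) ^ 2)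

/-- Norm of the gradient in the `x`-variables only. -/
def gradXNorm (w : Pt N₁ N₂ → ℝ) (z : Pt N₁ N₂) : ℝ := Real.sqrt (∑ i, (pX i w z) ^ 2)

/-- Norm of the gradient in the `y`-variables only. -/
def gradYNorm (w : Pt N₁ N₂ → ℝ) (z : Pt N₁ N₂) : ℝ := Real.sqrt (∑ j, (pY j w z) ^ 2)

/-- HS norm of the Hessian in the `x`-variables only. -/
def hessXNorm (w : Pt N₁ N₂ → ℝ) (z : Pt N₁ N₂) : ℝ :=
  Real.sqrt (∑ i, ∑ j, (pX i (pX j w) z) ^ 2)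

/-- HS norm of the Hessian in the `y`-variables only. -/
def hessYNorm (w : Pt N₁ N₂ → ℝ) (z : Pt N₁ N₂) : ℝ :=
  Real.sqrt (∑ h, ∑ k, (pY h (pY k w) z) ^ 2)

/-- `(u,v)` is a smooth positive solution of the Grushin Lane–Emden system
`-Δ_s u = v^p`, `-Δ_s v = u^θ`, `u, v > 0` on `ℝ^N`. -/
def IsLaneEmdenSol (s p θ : ℝ) (u v : Pt N₁ N₂ → ℝ) : Prop :=
  ContDiff ℝ (⊤ : ℕ∞) u ∧ ContDiff ℝ (⊤ : ℕ∞) v ∧ (∀ z, 0 < u z) ∧ (∀ z, 0 < v z) ∧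
  (∀ z, -grushinLap s u z = (v z) ^ p) ∧ (∀ z, -grushinLap s v z = (u z) ^ θ)

/-- Stability of a solution `(u,v)`: there are `η ≥ 0` and smooth positive `ξ, ζ` with
`-Δ_s ξ = p v^{p-1} ζ + η ξ` and `-Δ_s ζ = θ u^{θ-1} ξ + η ζ`. -/
def IsStable (s p θ : ℝ) (u v : Pt N₁ N₂ → ℝ) : Prop :=
  ∃ (η : ℝ) (ξ ζ : Pt N₁ N₂ → ℝ), 0 ≤ η ∧
    ContDiff ℝ (⊤ : ℕ∞) ξ ∧ ContDiff ℝ (⊤ : ℕ∞) ζ ∧ (∀ z, 0 < ξ z) ∧ (∀ z, 0 < ζ z) ∧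
    (∀ z, -grushinLap s ξ z = p * (v z) ^ (p - 1) * ζ z + η * ξ z) ∧
    (∀ z, -grushinLap s ζ z = θ * (u z) ^ (θ - 1) * ξ z + η * ζ z)

section Quartic

open Polynomial Filter Set

theorem exists_gt_eq_of_tendsto_atTop {α β : Type*}
    [ConditionallyCompleteLinearOrder α] [TopologicalSpace α] [OrderTopology α] [DenselyOrdered α]
    [LinearOrder β] [TopologicalSpace β] [OrderClosedTopology β] {f : α → β} {a : α} {y : β}
    (hf : ContinuousOn f (Ici a)) (htop : Tendsto f atTop atTop) (ha : f a < y) :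
    ∃ z, a < z ∧ f z = y := by
  have : Nonempty α := ⟨a⟩
  obtain ⟨z, haz, hz⟩ := isPreconnected_Ici.intermediate_value_Ici self_mem_Ici
    (le_principal_iff.mpr (Ici_mem_atTop a)) hf htop ha.le
  refine ⟨z, haz.lt_of_ne ?_, hz⟩
  rintro rfl
  exact ha.ne hz

theorem degree_pos_of_eval_neg {R : Type*} [Semiring R] [Preorder R] {P : R[X]} {a : R}
    (hlead : 0 ≤ P.leadingCoeff) (ha : P.eval a < 0) : 0 < P.degree := by
  by_contra! hdeg
  rw [eq_C_of_degree_le_zero hdeg, leadingCoeff_C] at hlead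
  rw [eq_C_of_degree_le_zero hdeg, eval_C] at ha
  exact hlead.not_gt ha

theorem exists_isRoot_gt_of_eval_neg {P : ℝ[X]} {a : ℝ} (hlead : 0 ≤ P.leadingCoeff)
    (ha : P.eval a < 0) : ∃ z, a < z ∧ P.IsRoot z :=
  exists_gt_eq_of_tendsto_atTop P.continuous.continuousOn
    (P.tendsto_atTop_of_leadingCoeff_nonneg (degree_pos_of_eval_neg hlead ha) hlead) ha

/-- The quartic `L` attached to the Lane–Emden system with exponents `p` and `θ`, as a
polynomial; its largest real root is to be compared with `p + 1`. -/
def laneEmdenQuartic (p θ : ℝ) : ℝ[X] :=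
  X ^ 4 - C (16 * p * θ * (p + 1) / (θ + 1)) * X ^ 2
    + C (16 * p * θ * (p + 1) * (p + θ + 2) / (θ + 1) ^ 2) * X
    - C (16 * p * θ * (p + 1) ^ 2 / (θ + 1) ^ 2)

theorem monic_laneEmdenQuartic (p θ : ℝ) : (laneEmdenQuartic p θ).Monic := by
  rw [laneEmdenQuartic]
  monicity!

theorem eval_laneEmdenQuartic (p θ z : ℝ) :
    (laneEmdenQuartic p θ).eval z =
      z ^ 4 - (16 * p * θ * (p + 1) / (θ + 1)) * z ^ 2
        + (16 * p * θ * (p + 1) * (p + θ + 2) / (θ + 1) ^ 2) * z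
        - 16 * p * θ * (p + 1) ^ 2 / (θ + 1) ^ 2 := by
  simp only [laneEmdenQuartic, eval_sub, eval_add, eval_mul, eval_pow, eval_X, eval_C]

theorem eval_add_one_laneEmdenQuartic {θ : ℝ} (hθ : θ + 1 ≠ 0) (p : ℝ) :
    (laneEmdenQuartic p θ).eval (p + 1) =
      ((p + 1) / (θ + 1)) ^ 2 * (((p + 1) * (θ + 1)) ^ 2 - (4 * p * θ) ^ 2) := by
  rw [eval_laneEmdenQuartic]
  field_simp
  ring

theorem eval_add_one_laneEmdenQuartic_neg {p θ : ℝ} (hp : p + 1 ≠ 0) (hθ : θ + 1 ≠ 0)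
    (h : |(p + 1) * (θ + 1)| < |4 * p * θ|) : (laneEmdenQuartic p θ).eval (p + 1) < 0 := by
  rw [eval_add_one_laneEmdenQuartic hθ]
  exact mul_neg_of_pos_of_neg (by positivity) (sub_neg.mpr (sq_lt_sq.mpr h))

theorem exists_isRoot_laneEmdenQuartic_gt {p θ : ℝ} (hp : p + 1 ≠ 0) (hθ : θ + 1 ≠ 0)
    (h : |(p + 1) * (θ + 1)| < |4 * p * θ|) :
    ∃ z, p + 1 < z ∧ (laneEmdenQuartic p θ).IsRoot z :=
  exists_isRoot_gt_of_eval_neg ((monic_laneEmdenQuartic p θ).leadingCoeff ▸ zero_le_one)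
    (eval_add_one_laneEmdenQuartic_neg hp hθ h)

end Quartic

/-- The scaling exponent `α` of the Lane–Emden system: `u ↦ λ ^ α u(λ ·)`, `v ↦ λ ^ β v(λ ·)` maps
solutions of `-Δ u = v ^ p`, `-Δ v = u ^ θ` to solutions. If `p * θ = 1`, division by zero makes it
`0`. -/
def scalingAlpha (p θ : ℝ) : ℝ := 2 * (p + 1) / (p * θ - 1)

/-- The scaling exponent `β` of the Lane–Emden system, the companion of `scalingAlpha`, again `0` if
`p * θ = 1`. -/
def scalingBeta (p θ : ℝ) : ℝ := 2 * (θ + 1) / (p * θ - 1)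

theorem scalingBeta_pos {p θ : ℝ} (hθ : -1 < θ) (h : 1 < p * θ) : 0 < scalingBeta p θ :=
  div_pos (by linarith) (sub_pos.mpr h)

theorem add_one_mul_scalingBeta {p θ : ℝ} (h : p * θ - 1 ≠ 0) :
    (p + 1) * scalingBeta p θ = 2 + scalingAlpha p θ + scalingBeta p θ := by
  rw [scalingAlpha, scalingBeta]
  field_simp
  ring

theorem add_one_ne_zero_of_scalingBeta_pos {p θ : ℝ} (hβ : 0 < scalingBeta p θ) : p + 1 ≠ 0 := by
  intro hp
  obtain rfl : p = -1 := eq_neg_of_add_eq_zero_left hp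
  rcases div_pos_iff.mp hβ with ⟨hnum, hden⟩ | ⟨hnum, hden⟩ <;> linarith

theorem abs_add_one_mul_add_one_lt {p θ : ℝ} (hp : 1 ≤ p) (hθ : 1 < θ) :
    |(p + 1) * (θ + 1)| < |4 * p * θ| := by
  rw [abs_of_pos (by positivity), abs_of_pos (by positivity)]
  calc (p + 1) * (θ + 1) < (2 * p) * (2 * θ) :=
        mul_lt_mul' (by linarith) (by linarith) (by linarith) (by linarith)
    _ = 4 * p * θ := by ring

theorem largest_root_general {p θ : ℝ} (hβ : 0 < scalingBeta p θ)
    (h : |(p + 1) * (θ + 1)| < |4 * p * θ|) :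
    (∃ z₀, p + 1 < z₀ ∧ (laneEmdenQuartic p θ).IsRoot z₀) ∧
      ∀ z₀, IsGreatest {z | (laneEmdenQuartic p θ).IsRoot z} z₀ →
        p + 1 < z₀ ∧ (p + 1) * scalingBeta p θ < scalingBeta p θ * z₀ ∧
          (p + 1) * scalingBeta p θ = 2 + scalingAlpha p θ + scalingBeta p θ := by
  obtain ⟨hnum, hden⟩ : 2 * (θ + 1) ≠ 0 ∧ p * θ - 1 ≠ 0 := div_ne_zero_iff.mp hβ.ne'
  obtain ⟨z, hz, hroot⟩ := exists_isRoot_laneEmdenQuartic_gt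
    (add_one_ne_zero_of_scalingBeta_pos hβ) (right_ne_zero_of_mul hnum) h
  refine ⟨⟨z, hz, hroot⟩, fun z₀ hz₀ => ?_⟩
  have hlt : p + 1 < z₀ := hz.trans_le (hz₀.2 hroot)
  refine ⟨hlt, ?_, add_one_mul_scalingBeta hden⟩
  rw [mul_comm]
  exact mul_lt_mul_of_pos_left hlt hβ

/-- for `θ > p ≥ 1` the quartic `L` has a real root `> p+1`, every maximal
real root of `L` is `> p+1`, and the largest real root `z₀` satisfies
`β z₀ > (p+1)β = 2 + α + β`, where `α = 2(p+1)/(pθ-1)`, `β = 2(θ+1)/(pθ-1)`. -/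
theorem largest_root (p θ : ℝ) (hp : 1 ≤ p) (hpθ : p < θ) :
    (∃ z₀ : ℝ, p + 1 < z₀ ∧
      z₀ ^ 4 - (16 * p * θ * (p + 1) / (θ + 1)) * z₀ ^ 2
        + (16 * p * θ * (p + 1) * (p + θ + 2) / (θ + 1) ^ 2) * z₀
        - 16 * p * θ * (p + 1) ^ 2 / (θ + 1) ^ 2 = 0)
    ∧ ∀ z₀ : ℝ,
      (z₀ ^ 4 - (16 * p * θ * (p + 1) / (θ + 1)) * z₀ ^ 2
          + (16 * p * θ * (p + 1) * (p + θ + 2) / (θ + 1) ^ 2) * z₀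
          - 16 * p * θ * (p + 1) ^ 2 / (θ + 1) ^ 2 = 0) →
      (∀ z : ℝ, z ^ 4 - (16 * p * θ * (p + 1) / (θ + 1)) * z ^ 2
          + (16 * p * θ * (p + 1) * (p + θ + 2) / (θ + 1) ^ 2) * z
          - 16 * p * θ * (p + 1) ^ 2 / (θ + 1) ^ 2 = 0 → z ≤ z₀) →
      (p + 1 < z₀
        ∧ (p + 1) * (2 * (θ + 1) / (p * θ - 1)) < (2 * (θ + 1) / (p * θ - 1)) * z₀
        ∧ (p + 1) * (2 * (θ + 1) / (p * θ - 1))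
            = 2 + 2 * (p + 1) / (p * θ - 1) + 2 * (θ + 1) / (p * θ - 1)) := by
  have hβ : 0 < scalingBeta p θ := scalingBeta_pos (by linarith) (one_lt_mul hp (hp.trans_lt hpθ))
  simpa only [Polynomial.IsRoot, eval_laneEmdenQuartic, scalingAlpha, scalingBeta, IsGreatest,
    mem_upperBounds, Set.mem_ofPred_eq, and_imp] using
    largest_root_general hβ (abs_add_one_mul_add_one_lt hp (hp.trans_lt hpθ))

end
end

section
/- Let s ≥ 0 and r > 2. There exists a constant C_r > 0 such that for every smooth nonnegative function u on ℝ^N and every smooth function ψ : ℝ^N → [0,1] the following pointwise inequality holds on ℝ^N: |∇_s² u| ψ^r ≤ C_r [ u ( |∇_s ψ|² ψ^{r−2} + |∇_s² ψ| ψ^{r−1} ) + |∇_s u| |∇_s ψ| ψ^{r−1} + |∇_s²(u ψ^r)| ]. -/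
open MeasureTheory Real

noncomputable section

variable {N₁ N₂ : ℕ}

/-! At a fixed point `z` the Grushin gradient and Hessian of `w` are the first and second
derivatives of `w` evaluated on the vectors `∂_{x_i}` and `|x|^s ∂_{y_k}`, because the weight is not
differentiated. It is therefore enough to bound the second derivative along an arbitrary finite
family of vectors. There the Leibniz rule expresses `ψ^r D²u` as
`D²(u ψ^r) - r ψ^{r-1} (Du ⊗ Dψ + Dψ ⊗ Du) - r (r-1) u ψ^{r-2} Dψ ⊗ Dψ - r u ψ^{r-1} D²ψ`,
and the triangle inequality for the Hilbert–Schmidt norm concludes. -/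

open Matrix
open scoped Matrix.Norms.Frobenius Topology

section SecondDerivative

variable {𝕜 E F 𝔸 : Type*} [NontriviallyNormedField 𝕜] [NormedAddCommGroup E] [NormedSpace 𝕜 E]
  [NormedAddCommGroup F] [NormedSpace 𝕜 F] [NormedCommRing 𝔸] [NormedAlgebra 𝕜 𝔸]
  {f g : E → 𝔸} {z : E}

lemma eventually_differentiableAt_of_contDiffAt {w : E → F} {n : WithTop ℕ∞}
    (hw : ContDiffAt 𝕜 n w z) (hn : n ≠ 0) : ∀ᶠ x in 𝓝 z, DifferentiableAt 𝕜 w x := by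
  have hw₁ : ContDiffAt 𝕜 1 w z := hw.of_le (ENat.one_le_iff_ne_zero_withTop.2 hn)
  exact (hw₁.eventually (by simp)).mono fun _ hx => hx.differentiableAt one_ne_zero

lemma hasFDerivAt_fderiv_apply {w : E → F} (hw : ContDiffAt 𝕜 2 w z) (e : E) :
    HasFDerivAt (fun x => fderiv 𝕜 w x e) ((fderiv 𝕜 (fderiv 𝕜 w) z).flip e) z := by
  have hDw : DifferentiableAt 𝕜 (fderiv 𝕜 w) z :=
    (hw.fderiv_right (m := 1) one_add_one_eq_two.le).differentiableAt one_ne_zero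
  simpa using hDw.hasFDerivAt.clm_apply (hasFDerivAt_const e z)

lemma fderiv_fderiv_mul (hf : ContDiffAt 𝕜 2 f z) (hg : ContDiffAt 𝕜 2 g z) (d e : E) :
    fderiv 𝕜 (fderiv 𝕜 fun x => f x * g x) z d e =
      f z * fderiv 𝕜 (fderiv 𝕜 g) z d e + fderiv 𝕜 f z d * fderiv 𝕜 g z e
        + fderiv 𝕜 g z d * fderiv 𝕜 f z e + g z * fderiv 𝕜 (fderiv 𝕜 f) z d e := by
  have hfg : (fun x => fderiv 𝕜 (fun x => f x * g x) x e) =ᶠ[𝓝 z]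
      fun x => f x * fderiv 𝕜 g x e + g x * fderiv 𝕜 f x e := by
    filter_upwards [eventually_differentiableAt_of_contDiffAt hf two_ne_zero,
      eventually_differentiableAt_of_contDiffAt hg two_ne_zero] with x hfx hgx
    simp [fderiv_fun_mul hfx hgx]
  have hf' := (hf.differentiableAt two_ne_zero).hasFDerivAt
  have hg' := (hg.differentiableAt two_ne_zero).hasFDerivAt
  have hD := ((hf'.fun_mul (hasFDerivAt_fderiv_apply hg e)).fun_add
    (hg'.fun_mul (hasFDerivAt_fderiv_apply hf e))).congr_of_eventuallyEq hfg
  rw [← ContinuousLinearMap.flip_apply, (hasFDerivAt_fderiv_apply (hf.mul hg) e).unique hD]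
  simp only [_root_.add_apply, _root_.smul_apply, ContinuousLinearMap.flip_apply, smul_eq_mul]
  ring

end SecondDerivative

section RealPower

variable {E : Type*} [NormedAddCommGroup E] [NormedSpace ℝ E] {ψ : E → ℝ} {r : ℝ} {z : E}

lemma contDiffAt_two_rpow_const (hψ : ContDiffAt ℝ 2 ψ z) (h : ψ z ≠ 0 ∨ 2 ≤ r) :
    ContDiffAt ℝ 2 (fun x => ψ x ^ r) z :=
  h.elim hψ.rpow_const_of_ne fun hr => ContDiffAt.rpow_const_of_le (m := 2) hψ (mod_cast hr)

lemma fderiv_fderiv_rpow_const (hψ : ContDiffAt ℝ 2 ψ z) (h : ψ z ≠ 0 ∨ 2 ≤ r) (d e : E) :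
    fderiv ℝ (fderiv ℝ fun x => ψ x ^ r) z d e =
      r * ψ z ^ (r - 1) * fderiv ℝ (fderiv ℝ ψ) z d e
        + r * (r - 1) * ψ z ^ (r - 2) * (fderiv ℝ ψ z d * fderiv ℝ ψ z e) := by
  have hψ' := (hψ.differentiableAt two_ne_zero).hasFDerivAt
  have h_nhds : ∀ᶠ x in 𝓝 z, ψ x ≠ 0 ∨ 1 ≤ r :=
    h.elim (fun h0 => (hψ.continuousAt.eventually_ne h0).mono fun _ => Or.inl)
      fun hr => .of_forall fun _ => Or.inr (by linarith)
  have hDψr : (fun x => fderiv ℝ (fun x => ψ x ^ r) x e) =ᶠ[𝓝 z]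
      fun x => r * ψ x ^ (r - 1) * fderiv ℝ ψ x e := by
    filter_upwards [eventually_differentiableAt_of_contDiffAt hψ two_ne_zero, h_nhds] with x hx hx0
    simp [(hx.hasFDerivAt.rpow_const hx0).fderiv]
  have hcoeff : HasFDerivAt (fun x => r * ψ x ^ (r - 1))
      (r • ((r - 1) * ψ z ^ (r - 1 - 1)) • fderiv ℝ ψ z) z :=
    (hψ'.rpow_const (h.imp_right fun hr => by linarith)).const_mul r
  have hD := (hcoeff.fun_mul (hasFDerivAt_fderiv_apply hψ e)).congr_of_eventuallyEq hDψr
  rw [← ContinuousLinearMap.flip_apply,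
    (hasFDerivAt_fderiv_apply (contDiffAt_two_rpow_const hψ h) e).unique hD,
    show r - 1 - 1 = r - 2 by ring]
  simp only [_root_.add_apply, _root_.smul_apply, ContinuousLinearMap.flip_apply, smul_eq_mul]
  ring

end RealPower

section FrobeniusNorm

variable {m n : Type*} [Fintype m] [Fintype n]

lemma frobenius_norm_eq_sqrt {α : Type*} [SeminormedAddCommGroup α] (A : Matrix m n α) :
    ‖A‖ = √(∑ i, ∑ j, ‖A i j‖ ^ 2) := by
  simp [frobenius_norm_def, sqrt_eq_rpow]

lemma frobenius_norm_vecMulVec {𝕜 : Type*} [RCLike 𝕜] (v : EuclideanSpace 𝕜 m)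
    (w : EuclideanSpace 𝕜 n) : ‖vecMulVec v w‖ = ‖v‖ * ‖w‖ := by
  rw [frobenius_norm_eq_sqrt, EuclideanSpace.norm_eq, EuclideanSpace.norm_eq,
    ← sqrt_mul (by positivity), Finset.sum_mul_sum]
  simp only [vecMulVec_apply, norm_mul, mul_pow]

end FrobeniusNorm

section Frame

variable {E ι : Type*} [NormedAddCommGroup E] [NormedSpace ℝ E]

/-- The gradient of `w` at `z` read along a family `X` of vectors: the first derivatives of `w` in
the directions `X a`. -/
def gradVec (X : ι → E) (w : E → ℝ) (z : E) : EuclideanSpace ℝ ι :=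
  WithLp.toLp 2 fun a => fderiv ℝ w z (X a)

/-- The Hessian of `w` at `z` read along a family `X` of vectors: the second derivatives of `w` in
the directions `X a`, `X b`. The family is frozen, so derivatives of a frame that varies with the
point do not enter. -/
def hessMatrix (X : ι → E) (w : E → ℝ) (z : E) : Matrix ι ι ℝ :=
  .of fun a b => fderiv ℝ (fderiv ℝ w) z (X a) (X b)

variable {u ψ : E → ℝ} {r : ℝ} {z : E}

lemma rpow_smul_hessMatrix (X : ι → E) (hu : ContDiffAt ℝ 2 u z) (hψ : ContDiffAt ℝ 2 ψ z)
    (h : ψ z ≠ 0 ∨ 2 ≤ r) :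
    ψ z ^ r • hessMatrix X u z =
      hessMatrix X (fun x => u x * ψ x ^ r) z
        - (r * ψ z ^ (r - 1)) • (vecMulVec (gradVec X u z) (gradVec X ψ z)
            + vecMulVec (gradVec X ψ z) (gradVec X u z))
        - (r * (r - 1) * u z * ψ z ^ (r - 2)) • vecMulVec (gradVec X ψ z) (gradVec X ψ z)
        - (r * u z * ψ z ^ (r - 1)) • hessMatrix X ψ z := by
  have hDψr : fderiv ℝ (fun x => ψ x ^ r) z = (r * ψ z ^ (r - 1)) • fderiv ℝ ψ z :=
    ((hψ.differentiableAt two_ne_zero).hasFDerivAt.rpow_const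
      (h.imp_right fun hr => by linarith)).fderiv
  ext a b
  simp only [hessMatrix, gradVec, vecMulVec_apply, of_apply, Matrix.smul_apply, Matrix.sub_apply,
    Matrix.add_apply, smul_eq_mul, fderiv_fderiv_mul hu (contDiffAt_two_rpow_const hψ h),
    fderiv_fderiv_rpow_const hψ h, hDψr, _root_.smul_apply]
  ring

variable [Fintype ι]

lemma norm_hessMatrix_mul_rpow_le (X : ι → E) (hu : ContDiffAt ℝ 2 u z)
    (hψ : ContDiffAt ℝ 2 ψ z) (hψ₀ : 0 ≤ ψ z) (h : ψ z ≠ 0 ∨ 2 ≤ r) :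
    ‖hessMatrix X u z‖ * ψ z ^ r ≤
      ‖hessMatrix X (fun x => u x * ψ x ^ r) z‖
        + |r| * ψ z ^ (r - 1) * (2 * (‖gradVec X u z‖ * ‖gradVec X ψ z‖))
        + |r * (r - 1)| * |u z| * ψ z ^ (r - 2) * ‖gradVec X ψ z‖ ^ 2
        + |r| * |u z| * ψ z ^ (r - 1) * ‖hessMatrix X ψ z‖ := by
  have hpow (q : ℝ) : |ψ z ^ q| = ψ z ^ q := abs_of_nonneg (rpow_nonneg hψ₀ q)
  have hcross : ‖vecMulVec (gradVec X u z) (gradVec X ψ z)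
      + vecMulVec (gradVec X ψ z) (gradVec X u z)‖ ≤ 2 * (‖gradVec X u z‖ * ‖gradVec X ψ z‖) := by
    refine (norm_add_le _ _).trans_eq ?_
    rw [frobenius_norm_vecMulVec, frobenius_norm_vecMulVec]
    ring
  have hsq : ‖vecMulVec (gradVec X ψ z) (gradVec X ψ z)‖ = ‖gradVec X ψ z‖ ^ 2 := by
    rw [frobenius_norm_vecMulVec, sq]
  calc ‖hessMatrix X u z‖ * ψ z ^ r = ‖ψ z ^ r • hessMatrix X u z‖ := by
        rw [norm_smul, norm_eq_abs, hpow, mul_comm]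
    _ ≤ _ := by
        rw [rpow_smul_hessMatrix X hu hψ h]
        refine norm_sub_le_of_le (norm_sub_le_of_le (norm_sub_le_of_le le_rfl ?_) ?_) ?_ <;>
          simp only [norm_smul, norm_eq_abs, hpow, abs_mul, hsq] <;> gcongr

end Frame

section Grushin

variable {w : Pt N₁ N₂ → ℝ} {z : Pt N₁ N₂}

lemma pX_eq_of_hasFDerivAt {w' : Pt N₁ N₂ →L[ℝ] ℝ} (hw : HasFDerivAt w w' z) (i : Fin N₁) :
    pX i w z = w' (Pi.single i 1, 0) :=
  (hw.comp_hasDerivAt_of_eq (z.1 i)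
    ((hasDerivAt_update z.1 i (z.1 i)).prodMk (hasDerivAt_const _ _)) (by simp)).deriv

lemma pY_eq_of_hasFDerivAt {w' : Pt N₁ N₂ →L[ℝ] ℝ} (hw : HasFDerivAt w w' z) (k : Fin N₂) :
    pY k w z = w' (0, Pi.single k 1) :=
  (hw.comp_hasDerivAt_of_eq (z.2 k)
    ((hasDerivAt_const _ _).prodMk (hasDerivAt_update z.2 k (z.2 k))) (by simp)).deriv

lemma hasFDerivAt_pX (hw : ContDiffAt ℝ 2 w z) (i : Fin N₁) :
    HasFDerivAt (pX i w) ((fderiv ℝ (fderiv ℝ w) z).flip (Pi.single i 1, 0)) z :=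
  (hasFDerivAt_fderiv_apply hw _).congr_of_eventuallyEq
    ((eventually_differentiableAt_of_contDiffAt hw two_ne_zero).mono fun _ hx =>
      pX_eq_of_hasFDerivAt hx.hasFDerivAt i)

lemma hasFDerivAt_pY (hw : ContDiffAt ℝ 2 w z) (k : Fin N₂) :
    HasFDerivAt (pY k w) ((fderiv ℝ (fderiv ℝ w) z).flip (0, Pi.single k 1)) z :=
  (hasFDerivAt_fderiv_apply hw _).congr_of_eventuallyEq
    ((eventually_differentiableAt_of_contDiffAt hw two_ne_zero).mono fun _ hx =>
      pY_eq_of_hasFDerivAt hx.hasFDerivAt k)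

/-- The Grushin vector fields `∂_{x_i}` and `|x|^s ∂_{y_k}` at the point `z = (x, y)`. -/
def grushinFrame (s : ℝ) (z : Pt N₁ N₂) : Fin N₁ ⊕ Fin N₂ → Pt N₁ N₂ :=
  Sum.elim (fun i => (Pi.single i 1, 0)) fun k => enorm' z.1 ^ s • (0, Pi.single k 1)

lemma enorm'_rpow_natCast_mul {n : ℕ} (x : Fin n → ℝ) (s : ℝ) (m : ℕ) :
    enorm' x ^ (m * s) = (enorm' x ^ s) ^ m := by
  rw [mul_comm, rpow_mul_natCast (show 0 ≤ enorm' x from sqrt_nonneg _)]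

lemma norm_gradVec_grushinFrame (s : ℝ) (hw : DifferentiableAt ℝ w z) :
    ‖gradVec (grushinFrame s z) w z‖ = grushinGrad s w z := by
  have hpow : enorm' z.1 ^ (2 * s) = (enorm' z.1 ^ s) ^ 2 :=
    mod_cast enorm'_rpow_natCast_mul z.1 s 2
  simp only [EuclideanSpace.norm_eq, gradVec, grushinFrame, grushinGrad, hpow,
    pX_eq_of_hasFDerivAt hw.hasFDerivAt, pY_eq_of_hasFDerivAt hw.hasFDerivAt,
    Fintype.sum_sum_type, Sum.elim_inl, Sum.elim_inr, map_smul, smul_eq_mul, norm_eq_abs, sq_abs,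
    mul_pow, Finset.mul_sum]

lemma norm_hessMatrix_grushinFrame (s : ℝ) (hw : ContDiffAt ℝ 2 w z) :
    ‖hessMatrix (grushinFrame s z) w z‖ = grushinHess s w z := by
  have hpow₂ : enorm' z.1 ^ (2 * s) = (enorm' z.1 ^ s) ^ 2 :=
    mod_cast enorm'_rpow_natCast_mul z.1 s 2
  have hpow₄ : enorm' z.1 ^ (4 * s) = (enorm' z.1 ^ s) ^ 4 :=
    mod_cast enorm'_rpow_natCast_mul z.1 s 4
  have hsymm (k : Fin N₂) (i : Fin N₁) :
      fderiv ℝ (fderiv ℝ w) z (0, Pi.single k 1) (Pi.single i 1, 0) =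
        fderiv ℝ (fderiv ℝ w) z (Pi.single i 1, 0) (0, Pi.single k 1) :=
    hw.isSymmSndFDerivAt (by simp) _ _
  rw [frobenius_norm_eq_sqrt, grushinHess, hpow₂, hpow₄]
  simp only [hessMatrix, grushinFrame, of_apply, norm_eq_abs, sq_abs, Fintype.sum_sum_type,
    Sum.elim_inl, Sum.elim_inr, map_smul, _root_.smul_apply, smul_eq_mul, mul_pow,
    Finset.sum_add_distrib, ← Finset.mul_sum, hsymm, ContinuousLinearMap.flip_apply,
    pX_eq_of_hasFDerivAt (hasFDerivAt_pX hw _), pX_eq_of_hasFDerivAt (hasFDerivAt_pY hw _),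
    pY_eq_of_hasFDerivAt (hasFDerivAt_pY hw _)]
  rw [Finset.sum_comm (s := (Finset.univ : Finset (Fin N₂))) (t := (Finset.univ : Finset (Fin N₁)))]
  ring_nf

end Grushin

/-- At points with `x = 0` and for `s < 0` the weight `|x|^s` reads `0 ^ s = 0`. -/
theorem pointwise_hessian_estimate_general (s r : ℝ) {u ψ : Pt N₁ N₂ → ℝ} {z : Pt N₁ N₂}
    (hu : ContDiffAt ℝ 2 u z) (hψ : ContDiffAt ℝ 2 ψ z) (hψ₀ : 0 ≤ ψ z)
    (h : ψ z ≠ 0 ∨ 2 ≤ r) :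
    grushinHess s u z * ψ z ^ r ≤
      (|r| + 1) ^ 2 * (|u z| * (grushinGrad s ψ z ^ 2 * ψ z ^ (r - 2)
            + grushinHess s ψ z * ψ z ^ (r - 1))
        + grushinGrad s u z * grushinGrad s ψ z * ψ z ^ (r - 1)
        + grushinHess s (fun x => u x * ψ x ^ r) z) := by
  have hprod : ContDiffAt ℝ 2 (fun x => u x * ψ x ^ r) z :=
    hu.mul (contDiffAt_two_rpow_const hψ h)
  rw [← norm_hessMatrix_grushinFrame s hu, ← norm_hessMatrix_grushinFrame s hψ,
    ← norm_hessMatrix_grushinFrame s hprod,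
    ← norm_gradVec_grushinFrame s (hu.differentiableAt two_ne_zero),
    ← norm_gradVec_grushinFrame s (hψ.differentiableAt two_ne_zero)]
  set X := grushinFrame s z
  have hone : 1 ≤ (|r| + 1) ^ 2 := by nlinarith [abs_nonneg r]
  have htwo : 2 * |r| ≤ (|r| + 1) ^ 2 := by nlinarith [abs_nonneg r]
  have hr : |r| ≤ (|r| + 1) ^ 2 := by nlinarith [abs_nonneg r]
  have hrr : |r * (r - 1)| ≤ (|r| + 1) ^ 2 := by
    rw [abs_mul]
    nlinarith [abs_nonneg r, abs_sub r 1, abs_one (α := ℝ)]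
  calc _ ≤ _ := norm_hessMatrix_mul_rpow_le X hu hψ hψ₀ h
    _ = 1 * ‖hessMatrix X (fun x => u x * ψ x ^ r) z‖
        + 2 * |r| * (‖gradVec X u z‖ * ‖gradVec X ψ z‖ * ψ z ^ (r - 1))
        + |r * (r - 1)| * (|u z| * (‖gradVec X ψ z‖ ^ 2 * ψ z ^ (r - 2)))
        + |r| * (|u z| * (‖hessMatrix X ψ z‖ * ψ z ^ (r - 1))) := by ring
    _ ≤ (|r| + 1) ^ 2 * ‖hessMatrix X (fun x => u x * ψ x ^ r) z‖
        + (|r| + 1) ^ 2 * (‖gradVec X u z‖ * ‖gradVec X ψ z‖ * ψ z ^ (r - 1))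
        + (|r| + 1) ^ 2 * (|u z| * (‖gradVec X ψ z‖ ^ 2 * ψ z ^ (r - 2)))
        + (|r| + 1) ^ 2 * (|u z| * (‖hessMatrix X ψ z‖ * ψ z ^ (r - 1))) := by gcongr
    _ = _ := by ring

/-- pointwise Grushin-Hessian inequality: for `s ≥ 0` and `r > 2` there is
`C_r > 0` such that for all smooth `u ≥ 0` and smooth `ψ : ℝ^N → [0,1]`,
`|∇_s² u| ψ^r ≤ C_r [u(|∇_s ψ|² ψ^{r-2} + |∇_s² ψ| ψ^{r-1})
  + |∇_s u||∇_s ψ| ψ^{r-1} + |∇_s²(u ψ^r)|]` pointwise on `ℝ^N`. -/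
theorem pointwise_hessian_estimate (N₁ N₂ : ℕ) (hN₁ : 1 ≤ N₁) (hN₂ : 1 ≤ N₂)
    (s r : ℝ) (hs : 0 ≤ s) (hr : 2 < r) :
    ∃ C > (0 : ℝ), ∀ u ψ : Pt N₁ N₂ → ℝ,
      ContDiff ℝ (⊤ : ℕ∞) u → (∀ z, 0 ≤ u z) →
      ContDiff ℝ (⊤ : ℕ∞) ψ → (∀ z, 0 ≤ ψ z ∧ ψ z ≤ 1) →
      ∀ z : Pt N₁ N₂,
        grushinHess s u z * ψ z ^ r ≤
          C * (u z * (grushinGrad s ψ z ^ 2 * ψ z ^ (r - 2)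
                + grushinHess s ψ z * ψ z ^ (r - 1))
            + grushinGrad s u z * grushinGrad s ψ z * ψ z ^ (r - 1)
            + grushinHess s (fun w => u w * ψ w ^ r) z) := by
  refine ⟨(|r| + 1) ^ 2, by positivity, fun u ψ hu hu₀ hψ hψ₀ z => ?_⟩
  have hle : (2 : WithTop ℕ∞) ≤ (⊤ : ℕ∞) := WithTop.coe_le_coe.2 le_top
  simpa only [abs_of_nonneg (hu₀ z)] using pointwise_hessian_estimate_general s r
    (hu.contDiffAt.of_le hle) (hψ.contDiffAt.of_le hle) (hψ₀ z).1 (.inr hr.le)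

end
end
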